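/- arXiv:2204.10487 — 6 statements merged into one kernel-verified Lean document; each statement's English description precedes it below -/
import Mathlib

section
/- Let E be an inner product space over ℂ, and let u, v ∈ E be orthonormal vectors (‖u‖ = ‖v‖ = 1 and ⟪u, v⟫ = 0). Let θ, φ be real numbers, let h = sin θ • u + cos θ • v, let R : E → E be the map R x = 2⟪h, x⟫ • h − x, and let S : E →ₗ[ℂ] E be any linear map with S u = −u and S v = v. Then R (S (cos φ • v + sin φ • u)) = cos(φ + 2θ) • v + sin(φ + 2θ) • u. -/
open scoped ComplexInnerProductSpace

/-- One Grover iteration `(2|h⟩⟨h| − I) ∘ S` acts as a rotation by angle `2θ` on the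
real span of the orthonormal pair `u, v`, where `h = sin θ • u + cos θ • v` and the
oracle `S` negates `u` and fixes `v`. -/
theorem grover_single_step_rotation
    {E : Type*} [NormedAddCommGroup E] [InnerProductSpace ℂ E]
    (u v : E) (hu : ‖u‖ = 1) (hv : ‖v‖ = 1) (huv : ⟪u, v⟫ = 0)
    (θ φ : ℝ) (h : E)
    (hh : h = (Real.sin θ : ℂ) • u + (Real.cos θ : ℂ) • v)
    (R : E → E) (hR : ∀ x, R x = (2 * ⟪h, x⟫) • h - x)
    (S : E →ₗ[ℂ] E) (hSu : S u = -u) (hSv : S v = v) :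
    R (S ((Real.cos φ : ℂ) • v + (Real.sin φ : ℂ) • u)) =
      (Real.cos (φ + 2 * θ) : ℂ) • v + (Real.sin (φ + 2 * θ) : ℂ) • u := by
  have hvu : ⟪v, u⟫ = 0 := inner_eq_zero_symm.mp huv
  have huu : ⟪u, u⟫ = 1 := by simp [inner_self_eq_norm_sq_to_K, hu]
  have hvv : ⟪v, v⟫ = 1 := by simp [inner_self_eq_norm_sq_to_K, hv]
  have hS : S ((Real.cos φ : ℂ) • v + (Real.sin φ : ℂ) • u) =
      (Real.cos φ : ℂ) • v - (Real.sin φ : ℂ) • u := by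
    rw [map_add, map_smul, map_smul, hSu, hSv, smul_neg, sub_eq_add_neg]
  have hin : ⟪h, (Real.cos φ : ℂ) • v - (Real.sin φ : ℂ) • u⟫ =
      (Real.cos θ : ℂ) * Real.cos φ - Real.sin θ * Real.sin φ := by
    rw [hh]
    simp only [inner_add_left, inner_sub_right, inner_smul_left, inner_smul_right,
      huv, hvu, huu, hvv, Complex.conj_ofReal]
    ring
  have hc : (Real.cos (φ + 2 * θ) : ℂ) =
      2 * ((Real.cos θ : ℂ) * Real.cos φ - Real.sin θ * Real.sin φ) * Real.cos θ
        - Real.cos φ := by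
    rw [Real.cos_add, Real.cos_two_mul, Real.sin_two_mul]
    push_cast
    ring
  have hs : (Real.sin (φ + 2 * θ) : ℂ) =
      2 * ((Real.cos θ : ℂ) * Real.cos φ - Real.sin θ * Real.sin φ) * Real.sin θ
        + Real.sin φ := by
    rw [Real.sin_add, Real.cos_two_mul, Real.sin_two_mul, Real.cos_sq']
    push_cast
    ring
  rw [hS, hR, hin, hc, hs, hh]
  module
end

section
/- Let E be an inner product space over ℂ, and let u, v ∈ E be orthonormal vectors (‖u‖ = ‖v‖ = 1 and ⟪u, v⟫ = 0). Let θ be a real number, let h = sin θ • u + cos θ • v, let R : E → E be the map R x = 2⟪h, x⟫ • h − x, and let S : E →ₗ[ℂ] E be any linear map with S u = −u and S v = v. Then for every natural number k, (R ∘ S)^k h = cos((2k+1)θ) • v + sin((2k+1)θ) • u. -/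
open scoped ComplexInnerProductSpace

/-- Equation (9) of the paper in abstract form: `k` iterations of the Grover operator
`G = (2|h⟩⟨h| − I) ∘ S` rotate the initial state `h = sin θ • u + cos θ • v` to
`cos((2k+1)θ) • v + sin((2k+1)θ) • u`. -/
theorem grover_iterate_rotation
    {E : Type*} [NormedAddCommGroup E] [InnerProductSpace ℂ E]
    (u v : E) (hu : ‖u‖ = 1) (hv : ‖v‖ = 1) (huv : ⟪u, v⟫ = 0)
    (θ : ℝ) (h : E)
    (hh : h = (Real.sin θ : ℂ) • u + (Real.cos θ : ℂ) • v)
    (R : E → E) (hR : ∀ x, R x = (2 * ⟪h, x⟫) • h - x)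
    (S : E →ₗ[ℂ] E) (hSu : S u = -u) (hSv : S v = v) :
    ∀ k : ℕ,
      (R ∘ ⇑S)^[k] h =
        (Real.cos ((2 * k + 1) * θ) : ℂ) • v + (Real.sin ((2 * k + 1) * θ) : ℂ) • u := by
  intro k
  have huu : ⟪u, u⟫ = 1 := by
    rw [inner_self_eq_norm_sq_to_K, hu]; simp
  have hvv : ⟪v, v⟫ = 1 := by
    rw [inner_self_eq_norm_sq_to_K, hv]; simp
  have hvu : ⟪v, u⟫ = 0 := inner_eq_zero_symm.mp huv
  induction k with
  | zero =>
    rw [Function.iterate_zero, id, hh, add_comm]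
    simp
  | succ k ih =>
    rw [Function.iterate_succ_apply', ih, Function.comp_apply]
    have e : (2 * ((k + 1 : ℕ) : ℝ) + 1) * θ = (2 * k + 1) * θ + 2 * θ := by
      push_cast; ring
    rw [e]
    generalize (2 * (k : ℝ) + 1) * θ = φ
    have hS : S ((Real.cos φ : ℂ) • v + (Real.sin φ : ℂ) • u)
        = (Real.cos φ : ℂ) • v - (Real.sin φ : ℂ) • u := by
      rw [map_add, map_smul, map_smul, hSu, hSv, smul_neg, sub_eq_add_neg]
    have hI : ⟪h, (Real.cos φ : ℂ) • v - (Real.sin φ : ℂ) • u⟫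
        = ((Real.cos θ * Real.cos φ - Real.sin θ * Real.sin φ : ℝ) : ℂ) := by
      rw [hh]
      simp only [inner_add_left, inner_sub_right, inner_smul_left, inner_smul_right,
        huu, hvv, huv, hvu, Complex.conj_ofReal]
      push_cast
      ring
    have hc : Real.cos (φ + 2 * θ)
        = 2 * (Real.cos θ * Real.cos φ - Real.sin θ * Real.sin φ) * Real.cos θ - Real.cos φ := by
      rw [Real.cos_add, Real.cos_two_mul, Real.sin_two_mul]; ring
    have hs : Real.sin (φ + 2 * θ)
        = 2 * (Real.cos θ * Real.cos φ - Real.sin θ * Real.sin φ) * Real.sin θ + Real.sin φ := by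
      rw [Real.sin_add, Real.cos_two_mul, Real.sin_two_mul]
      linear_combination (2 * Real.sin φ) * Real.sin_sq_add_cos_sq θ
    rw [hS, hR, hI, hc, hs, hh]
    simp only [Complex.ofReal_sub, Complex.ofReal_add, Complex.ofReal_mul, Complex.ofReal_ofNat]
    module
end

section
/- Let n ≥ 1, N = 2^n, and f : (Fin n → Bool) → Bool with A = {x | f x = true}, B = {x | f x = false}, a = |A|, b = |B|, and 1 ≤ a < N. In EuclideanSpace ℂ (Fin n → Bool) with standard basis vectors e_x, define uA = (1/√a) Σ_{x∈A} e_x, uB = (1/√b) Σ_{x∈B} e_x, h = (1/√N) Σ_x e_x, let Z_f be the linear map with Z_f e_x = (if f x then −1 else 1) • e_x, let θ = arcsin(√(a/N)), and let G : EuclideanSpace ℂ (Fin n → Bool) →ₗ[ℂ] EuclideanSpace ℂ (Fin n → Bool) be G x = 2⟪h, Z_f x⟫ • h − Z_f x. Then for every natural number k, G^k h = cos((2k+1)θ) • uB + sin((2k+1)θ) • uA. -/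
open scoped ComplexInnerProductSpace
open Finset

/-- Equation (9) of the paper: `k` iterations of the Grover iterate
`G = (2|h⟩⟨h| − I) Z_f` applied to the uniform superposition `h` yield
`cos((2k+1)θ) • uB + sin((2k+1)θ) • uA`, where `sin θ = √(a/N)`. -/
theorem grover_iterate_formula
    (n : ℕ) (hn : 1 ≤ n) (N : ℕ) (hN : N = 2 ^ n)
    (f : (Fin n → Bool) → Bool)
    (A B : Finset (Fin n → Bool))
    (hA : A = Finset.univ.filter fun x => f x = true)
    (hB : B = Finset.univ.filter fun x => f x = false)
    (a b : ℕ) (ha : a = A.card) (hb : b = B.card)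
    (ha1 : 1 ≤ a) (haN : a < N)
    (uA uB h : EuclideanSpace ℂ (Fin n → Bool))
    (huA : uA = ((1 / Real.sqrt a : ℝ) : ℂ) • ∑ x ∈ A, EuclideanSpace.single x (1 : ℂ))
    (huB : uB = ((1 / Real.sqrt b : ℝ) : ℂ) • ∑ x ∈ B, EuclideanSpace.single x (1 : ℂ))
    (hh : h = ((1 / Real.sqrt N : ℝ) : ℂ) •
      ∑ x : Fin n → Bool, EuclideanSpace.single x (1 : ℂ))
    (Zf : EuclideanSpace ℂ (Fin n → Bool) →ₗ[ℂ] EuclideanSpace ℂ (Fin n → Bool))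
    (hZf : ∀ x : Fin n → Bool,
      Zf (EuclideanSpace.single x (1 : ℂ)) =
        (if f x then (-1 : ℂ) else 1) • EuclideanSpace.single x (1 : ℂ))
    (θ : ℝ) (hθ : θ = Real.arcsin (Real.sqrt ((a : ℝ) / N)))
    (G : EuclideanSpace ℂ (Fin n → Bool) →ₗ[ℂ] EuclideanSpace ℂ (Fin n → Bool))
    (hG : ∀ x, G x = (2 * ⟪h, Zf x⟫) • h - Zf x) :
    ∀ k : ℕ,
      (G ^ k) h = (Real.cos ((2 * k + 1) * θ) : ℂ) • uB +
        (Real.sin ((2 * k + 1) * θ) : ℂ) • uA := by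
  have hab : a + b = N := by
    have h1 := Finset.card_filter_add_card_filter_not (s := (Finset.univ : Finset (Fin n → Bool)))
      (fun x => f x = true)
    simp only [Bool.not_eq_true] at h1
    rw [ha, hb, hA, hB, h1, hN]
    simp
  have hapos : (0 : ℝ) < a := by exact_mod_cast ha1
  have hbpos : (0 : ℝ) < b := by
    have : 0 < b := by omega
    exact_mod_cast this
  have habR : (a : ℝ) + b = N := by exact_mod_cast hab
  have hNpos : (0 : ℝ) < N := by linarith
  have hsin : Real.sin θ = √(a : ℝ) / √(N : ℝ) := by
    rw [hθ, Real.sin_arcsin, Real.sqrt_div hapos.le]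
    · linarith [Real.sqrt_nonneg ((a : ℝ) / N)]
    · rw [Real.sqrt_le_one, div_le_one hNpos]
      linarith
  have hcos : Real.cos θ = √(b : ℝ) / √(N : ℝ) := by
    rw [hθ, Real.cos_arcsin, Real.sq_sqrt (by positivity), ← Real.sqrt_div hbpos.le]
    congr 1
    field_simp
    linarith
  have sa : √(a : ℝ) ≠ 0 := (Real.sqrt_pos.2 hapos).ne'
  have sb : √(b : ℝ) ≠ 0 := (Real.sqrt_pos.2 hbpos).ne'
  have sN : √(N : ℝ) ≠ 0 := (Real.sqrt_pos.2 hNpos).ne'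
  have hdec : h = (Real.cos θ : ℂ) • uB + (Real.sin θ : ℂ) • uA := by
    have hsum : ∑ x : Fin n → Bool, EuclideanSpace.single x (1 : ℂ)
        = ∑ x ∈ A, EuclideanSpace.single x (1 : ℂ) + ∑ x ∈ B, EuclideanSpace.single x (1 : ℂ) := by
      rw [hA, hB, ← Finset.sum_filter_add_sum_filter_not Finset.univ (fun x => f x = true)]
      simp only [Bool.not_eq_true]
    rw [hh, huA, huB, hsum, smul_smul, smul_smul, hsin, hcos, ← Complex.ofReal_mul,
      ← Complex.ofReal_mul, smul_add, add_comm]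
    congr 3 <;> field_simp
  have hZA : Zf uA = -uA := by
    rw [huA, map_smul, map_sum, ← smul_neg, ← Finset.sum_neg_distrib]
    congr 1
    refine Finset.sum_congr rfl fun x hx => ?_
    have hx' : f x = true := by simpa [hA] using hx
    rw [hZf, hx']
    simp
  have hZB : Zf uB = uB := by
    rw [huB, map_smul, map_sum]
    congr 1
    refine Finset.sum_congr rfl fun x hx => ?_
    have hx' : f x = false := by simpa [hB] using hx
    rw [hZf, hx']
    simp
  have hin : ∀ x : Fin n → Bool, ⟪h, EuclideanSpace.single x (1 : ℂ)⟫ = ((1 / √(N : ℝ) : ℝ) : ℂ) := by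
    intro x
    rw [EuclideanSpace.inner_single_right, hh]
    simp [Finset.sum_apply, Pi.single_apply]
  have hIA : ⟪h, uA⟫ = (Real.sin θ : ℂ) := by
    rw [huA, inner_smul_right, inner_sum, Finset.sum_congr rfl (fun x _ => hin x),
      Finset.sum_const, ← ha, hsin, nsmul_eq_mul]
    norm_cast
    field_simp
    rw [Real.sq_sqrt hapos.le]
  have hIB : ⟪h, uB⟫ = (Real.cos θ : ℂ) := by
    rw [huB, inner_smul_right, inner_sum, Finset.sum_congr rfl (fun x _ => hin x),
      Finset.sum_const, ← hb, hcos, nsmul_eq_mul]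
    norm_cast
    field_simp
    rw [Real.sq_sqrt hbpos.le]
  have key : ∀ φ : ℝ, G ((Real.cos φ : ℂ) • uB + (Real.sin φ : ℂ) • uA)
      = (Real.cos (φ + 2 * θ) : ℂ) • uB + (Real.sin (φ + 2 * θ) : ℂ) • uA := by
    intro φ
    have e1 : Real.cos (φ + 2 * θ) = 2 * (Real.cos φ * Real.cos θ - Real.sin φ * Real.sin θ)
        * Real.cos θ - Real.cos φ := by
      rw [Real.cos_add, Real.cos_two_mul, Real.sin_two_mul]
      ring
    have e2 : Real.sin (φ + 2 * θ) = 2 * (Real.cos φ * Real.cos θ - Real.sin φ * Real.sin θ)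
        * Real.sin θ + Real.sin φ := by
      rw [Real.sin_add, Real.cos_two_mul, Real.sin_two_mul]
      linear_combination 2 * Real.sin φ * Real.sin_sq_add_cos_sq θ
    rw [hG, map_add, map_smul, map_smul, hZA, hZB, inner_add_right, inner_smul_right,
      inner_smul_right, inner_neg_right, hIA, hIB, e1, e2, hdec]
    push_cast
    module
  intro k
  induction k with
  | zero => simpa using hdec
  | succ k ih =>
    rw [pow_succ', Module.End.mul_apply, ih, key]
    have : (2 * (k : ℝ) + 1) * θ + 2 * θ = (2 * ((k + 1 : ℕ) : ℝ) + 1) * θ := by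
      push_cast
      ring
    rw [this]
end

section
/- Let n ≥ 1, N = 2^n, and f : (Fin n → Bool) → Bool with A = {x | f x = true}, a = |A|, and 1 ≤ a < N. In EuclideanSpace ℂ (Fin n → Bool) with standard basis vectors e_x, define h = (1/√N) Σ_x e_x, let Z_f be the linear map with Z_f e_x = (if f x then −1 else 1) • e_x, let θ = arcsin(√(a/N)), and let G be the linear map G x = 2⟪h, Z_f x⟫ • h − Z_f x. Then for every natural number k, Σ_{x∈A} ‖⟪e_x, G^k h⟩‖² = sin²((2k+1)θ); in particular, with k = ⌊(π/4)√(N/a)⌋, the probability that measuring G^k h in the computational basis yields a solution of f equals sin²((2⌊(π/4)√(N/a)⌋ + 1)·arcsin(√(a/N))). -/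
open scoped ComplexInnerProductSpace
open Finset

/-- Equation (10) of the paper: after `k` Grover iterations the probability of
measuring a solution is `sin²((2k+1)θ)`; in particular, with
`k = ⌊(π/4)√(N/a)⌋` iterations the success probability equals
`sin²((2⌊(π/4)√(N/a)⌋+1)·arcsin(√(a/N)))`. -/
theorem grover_success_probability
    (n : ℕ) (hn : 1 ≤ n) (N : ℕ) (hN : N = 2 ^ n)
    (f : (Fin n → Bool) → Bool)
    (A : Finset (Fin n → Bool))
    (hA : A = Finset.univ.filter fun x => f x = true)
    (a : ℕ) (ha : a = A.card) (ha1 : 1 ≤ a) (haN : a < N)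
    (h : EuclideanSpace ℂ (Fin n → Bool))
    (hh : h = ((1 / Real.sqrt N : ℝ) : ℂ) •
      ∑ x : Fin n → Bool, EuclideanSpace.single x (1 : ℂ))
    (Zf : EuclideanSpace ℂ (Fin n → Bool) →ₗ[ℂ] EuclideanSpace ℂ (Fin n → Bool))
    (hZf : ∀ x : Fin n → Bool,
      Zf (EuclideanSpace.single x (1 : ℂ)) =
        (if f x then (-1 : ℂ) else 1) • EuclideanSpace.single x (1 : ℂ))
    (θ : ℝ) (hθ : θ = Real.arcsin (Real.sqrt ((a : ℝ) / N)))
    (G : EuclideanSpace ℂ (Fin n → Bool) →ₗ[ℂ] EuclideanSpace ℂ (Fin n → Bool))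
    (hG : ∀ x, G x = (2 * ⟪h, Zf x⟫) • h - Zf x) :
    (∀ k : ℕ,
      ∑ x ∈ A, ‖⟪EuclideanSpace.single x (1 : ℂ), (G ^ k) h⟫‖ ^ 2 =
        Real.sin ((2 * k + 1) * θ) ^ 2) ∧
    (∑ x ∈ A,
        ‖⟪EuclideanSpace.single x (1 : ℂ),
            (G ^ ⌊(Real.pi / 4) * Real.sqrt ((N : ℝ) / a)⌋₊) h⟫‖ ^ 2 =
      Real.sin ((2 * (⌊(Real.pi / 4) * Real.sqrt ((N : ℝ) / a)⌋₊ : ℝ) + 1) *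
        Real.arcsin (Real.sqrt ((a : ℝ) / N))) ^ 2) := by
  have hNr : (0 : ℝ) < N := by exact_mod_cast (by omega : 0 < N)
  have har : (0 : ℝ) < a := by exact_mod_cast ha1
  have haNr : (a : ℝ) < N := by exact_mod_cast haN
  obtain ⟨r, hr⟩ : ∃ r, r = Real.sqrt N := ⟨_, rfl⟩
  obtain ⟨s, hs⟩ : ∃ s, s = Real.sqrt a := ⟨_, rfl⟩
  obtain ⟨c, hc⟩ : ∃ c, c = Real.sqrt (N - a) := ⟨_, rfl⟩
  have hr0 : 0 < r := hr ▸ Real.sqrt_pos.2 hNr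
  have hs0 : 0 < s := hs ▸ Real.sqrt_pos.2 har
  have hc0 : 0 < c := hc ▸ Real.sqrt_pos.2 (by linarith)
  have hr2 : r ^ 2 = N := by rw [hr, Real.sq_sqrt hNr.le]
  have hs2 : s ^ 2 = a := by rw [hs, Real.sq_sqrt har.le]
  have hc2 : c ^ 2 = N - a := by rw [hc, Real.sq_sqrt (by linarith)]
  have hrsc : r ^ 2 = s ^ 2 + c ^ 2 := by rw [hr2, hs2, hc2]; ring
  have hsr : Real.sqrt ((a : ℝ) / N) = s / r := by
    rw [Real.sqrt_div har.le, ← hs, ← hr]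
  have hle : s / r ≤ 1 := by
    rw [div_le_one hr0]; nlinarith [sq_nonneg c]
  have hsin : Real.sin θ = s / r := by
    rw [hθ, hsr, Real.sin_arcsin (by have := div_pos hs0 hr0; linarith) hle]
  have hcos : Real.cos θ = c / r := by
    rw [hθ, hsr, Real.cos_arcsin]
    rw [show 1 - (s / r) ^ 2 = (c / r) ^ 2 by field_simp; linarith]
    exact Real.sqrt_sq (div_pos hc0 hr0).le
  have hsin2 : Real.sin (2 * θ) = 2 * s * c / r ^ 2 := by
    rw [Real.sin_two_mul, hsin, hcos]; field_simp
  have hcos2 : Real.cos (2 * θ) = (c ^ 2 - s ^ 2) / r ^ 2 := by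
    rw [Real.cos_two_mul', hsin, hcos]; field_simp
  obtain ⟨w, hw⟩ : ∃ w : ℂ → ℂ → EuclideanSpace ℂ (Fin n → Bool),
      ∀ p q, w p q = ∑ x, (if f x then p else q) • EuclideanSpace.single x (1 : ℂ) :=
    ⟨fun p q => _, fun _ _ => rfl⟩
  have hwx : ∀ p q x, w p q x = if f x then p else q := by
    intro p q x
    rw [hw]
    simp [Finset.sum_apply, -ite_smul, Pi.single_apply]
  have hhw : h = w ((1 / r : ℝ) : ℂ) ((1 / r : ℝ) : ℂ) := by
    rw [hh, hw, Finset.smul_sum, ← hr]; simp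
  have hZw : ∀ p q, Zf (w p q) = w (-p) q := by
    intro p q
    rw [hw, hw, map_sum]
    refine Finset.sum_congr rfl fun x _ => ?_
    rw [map_smul, hZf]
    by_cases hx : f x <;> simp [hx]
  have hcardA : (#{x | f x = true} : ℂ) = (s : ℂ) ^ 2 := by
    rw [← hA, ← ha]; exact_mod_cast hs2.symm
  have hcardB : (#{x | ¬ f x = true} : ℂ) = (c : ℂ) ^ 2 := by
    have h1 := Finset.card_filter_add_card_filter_not (s := (Finset.univ : Finset (Fin n → Bool))) (fun x => f x = true)
    have h2 : (Finset.univ : Finset (Fin n → Bool)).card = N := by simp [hN]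
    rw [h2, ← hA, ← ha] at h1
    have h3 : (a : ℝ) + (#{x | ¬ f x = true} : ℝ) = N := by exact_mod_cast h1
    have h4 : (#{x | ¬ f x = true} : ℝ) = c ^ 2 := by linarith
    exact_mod_cast h4
  have hin : ∀ p q, ⟪h, w p q⟫ = (1 / r : ℂ) * (s ^ 2 * p + c ^ 2 * q) := by
    intro p q
    rw [hhw, PiLp.inner_apply]
    simp only [hwx, ite_self]
    simp only [RCLike.inner_apply, Complex.conj_ofReal]
    rw [← Finset.sum_mul, Finset.sum_ite, Finset.sum_const, Finset.sum_const,
      nsmul_eq_mul, nsmul_eq_mul, hcardA, hcardB]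
    push_cast; ring
  have hGw : ∀ p q, G (w p q) =
      w (2 * ((1 / r : ℂ) * (s ^ 2 * (-p) + c ^ 2 * q)) * (1 / r) + p)
        (2 * ((1 / r : ℂ) * (s ^ 2 * (-p) + c ^ 2 * q)) * (1 / r) - q) := by
    intro p q
    rw [hG, hZw, hin, hhw]
    ext x
    simp only [PiLp.sub_apply, PiLp.smul_apply, hwx, smul_eq_mul]
    by_cases hx : f x <;> simp [hx]
  have key : ∀ k : ℕ, (G ^ k) h =
      w ((Real.sin ((2 * k + 1) * θ) / s : ℝ) : ℂ) ((Real.cos ((2 * k + 1) * θ) / c : ℝ) : ℂ) := by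
    intro k
    induction k with
    | zero =>
      have e1 : Real.sin ((2 * ((0 : ℕ) : ℝ) + 1) * θ) / s = 1 / r := by
        simp [hsin]; field_simp
      have e2 : Real.cos ((2 * ((0 : ℕ) : ℝ) + 1) * θ) / c = 1 / r := by
        simp [hcos]; field_simp
      rw [e1, e2, pow_zero, hhw]; rfl
    | succ k ih =>
      rw [pow_succ', Module.End.mul_apply, ih, hGw]
      have e : (2 * ((k + 1 : ℕ) : ℝ) + 1) * θ = (2 * k + 1) * θ + 2 * θ := by
        push_cast; ring
      rw [e, Real.sin_add, Real.cos_add, hsin2, hcos2]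
      generalize Real.sin ((2 * k + 1) * θ) = S
      generalize Real.cos ((2 * k + 1) * θ) = C
      congr 1
      · have : 2 * ((1 / r) * (s ^ 2 * (-(S / s)) + c ^ 2 * (C / c))) * (1 / r) + S / s
            = (S * ((c ^ 2 - s ^ 2) / r ^ 2) + C * (2 * s * c / r ^ 2)) / s := by
          field_simp
          rw [hrsc]; ring
        rw [← this]; push_cast; ring
      · have : 2 * ((1 / r) * (s ^ 2 * (-(S / s)) + c ^ 2 * (C / c))) * (1 / r) - C / c
            = (C * ((c ^ 2 - s ^ 2) / r ^ 2) - S * (2 * s * c / r ^ 2)) / c := by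
          field_simp
          rw [hrsc]; ring
        rw [← this]; push_cast; ring
  have main : ∀ k : ℕ,
      ∑ x ∈ A, ‖⟪EuclideanSpace.single x (1 : ℂ), (G ^ k) h⟫‖ ^ 2 =
        Real.sin ((2 * k + 1) * θ) ^ 2 := by
    intro k
    have : ∀ x ∈ A, ‖⟪EuclideanSpace.single x (1 : ℂ), (G ^ k) h⟫‖ ^ 2 =
        (Real.sin ((2 * k + 1) * θ) / s) ^ 2 := by
      intro x hx
      have hfx : f x = true := by simpa [hA] using hx
      rw [EuclideanSpace.inner_single_left, key, hwx, if_pos hfx, map_one, one_mul,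
        Complex.norm_real, Real.norm_eq_abs, sq_abs]
    rw [Finset.sum_congr rfl this, Finset.sum_const, nsmul_eq_mul, ← ha, ← hs2]
    field_simp
  refine ⟨main, ?_⟩
  rw [main, hθ]
end

section
/- For every real number θ with 0 < θ ≤ π/2, letting k = ⌊π/(4θ)⌋, one has sin²((2k+1)θ) ≥ cos²θ. In particular, if sin θ = √(a/N) for natural numbers 1 ≤ a ≤ N, then the success probability sin²((2⌊π/(4θ)⌋+1)θ) of Grover's algorithm is at least 1 − a/N. -/
/-- With `k = ⌊π/(4θ)⌋` Grover iterations, `(2k+1)θ` lies within `θ` of `π/2`, so the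
success probability `sin²((2k+1)θ)` is at least `cos²θ`; in particular, when
`sin θ = √(a/N)`, it is at least `1 − a/N`. -/
theorem grover_success_probability_lower_bound
    (θ : ℝ) (hθ0 : 0 < θ) (hθ1 : θ ≤ Real.pi / 2) :
    Real.sin ((2 * (⌊Real.pi / (4 * θ)⌋₊ : ℝ) + 1) * θ) ^ 2 ≥ Real.cos θ ^ 2 ∧
      ∀ a N : ℕ, 1 ≤ a → a ≤ N → Real.sin θ = Real.sqrt ((a : ℝ) / N) →
        Real.sin ((2 * (⌊Real.pi / (4 * θ)⌋₊ : ℝ) + 1) * θ) ^ 2 ≥ 1 - (a : ℝ) / N := by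
  have key : Real.sin ((2 * (⌊Real.pi / (4 * θ)⌋₊ : ℝ) + 1) * θ) ^ 2 ≥ Real.cos θ ^ 2 := by
    have hp := Real.pi_pos
    have h1 : (⌊Real.pi / (4 * θ)⌋₊ : ℝ) ≤ Real.pi / (4 * θ) := Nat.floor_le (by positivity)
    have h2 : Real.pi / (4 * θ) < (⌊Real.pi / (4 * θ)⌋₊ : ℝ) + 1 := Nat.lt_floor_add_one _
    generalize (⌊Real.pi / (4 * θ)⌋₊ : ℝ) = k at h1 h2 ⊢
    rw [le_div_iff₀ (by positivity)] at h1
    rw [div_lt_iff₀ (by positivity)] at h2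
    have h3 : |(2 * k + 1) * θ - Real.pi / 2| ≤ θ := by
      rw [abs_le]
      constructor <;> nlinarith
    have h4 : Real.cos θ ≤ Real.cos |(2 * k + 1) * θ - Real.pi / 2| :=
      Real.cos_le_cos_of_nonneg_of_le_pi (abs_nonneg _) (by linarith) h3
    rw [Real.cos_abs, Real.cos_sub_pi_div_two] at h4
    have h5 : 0 ≤ Real.cos θ := Real.cos_nonneg_of_neg_pi_div_two_le_of_le (by linarith) hθ1
    exact pow_le_pow_left₀ h5 h4 2
  refine ⟨key, fun a N _ _ hs => ?_⟩
  have h6 : Real.sin θ ^ 2 = (a : ℝ) / N := by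
    rw [hs, Real.sq_sqrt (by positivity)]
  have h7 := Real.sin_sq_add_cos_sq θ
  linarith
end

section
/- Let n ≥ 1 and m ≥ 1, let C : Fin m → ((Fin n → Bool) → Bool) be a family of clauses, let f : (Fin n → Bool) → Bool be defined by f y = (∀ j, C j y), and for each j let α j y = if C j y then 0 else 1. In EuclideanSpace ℂ ((Fin n → Bool) × ZMod (m+1)) with standard basis vectors e_{(y,c)}, define linear maps: U_j e_{(y,c)} = e_{(y, c + α j y)}, U′_j e_{(y,c)} = e_{(y, c − α j y)} (addition and subtraction in ZMod (m+1)), and Z₀ e_{(y,c)} = (if c = 0 then −1 else 1) • e_{(y,c)}. Then for every y : Fin n → Bool, (U′_1 ∘ U′_2 ∘ ⋯ ∘ U′_m ∘ Z₀ ∘ U_m ∘ ⋯ ∘ U_2 ∘ U_1) e_{(y,0)} = (if f y then −1 else 1) • e_{(y,0)}. -/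
open Finset

/-- Theorem 5 of the paper (correctness of the oracle circuit for a CNF): the circuit
`U′_1 ∘ ⋯ ∘ U′_m ∘ Z₀ ∘ U_m ∘ ⋯ ∘ U_1` maps `|y⟩|0⟩` to `(−1)^{f(y)}|y⟩|0⟩`, where
`U_j` (resp. `U′_j`) adds (resp. subtracts) the false-clause indicator `α j y` to the
counter register modulo `m+1`, and `Z₀` flips the sign exactly on counter value `0`. -/
theorem cnf_oracle_circuit_correct
    (n m : ℕ) (hn : 1 ≤ n) (hm : 1 ≤ m)
    (C : Fin m → ((Fin n → Bool) → Bool))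
    (f : (Fin n → Bool) → Bool)
    (hf : ∀ y, f y = true ↔ ∀ j, C j y = true)
    (α : Fin m → (Fin n → Bool) → ℕ)
    (hα : ∀ j y, α j y = if C j y then 0 else 1)
    (U U' : Fin m → (EuclideanSpace ℂ ((Fin n → Bool) × ZMod (m + 1)) →ₗ[ℂ]
      EuclideanSpace ℂ ((Fin n → Bool) × ZMod (m + 1))))
    (Z₀ : EuclideanSpace ℂ ((Fin n → Bool) × ZMod (m + 1)) →ₗ[ℂ]
      EuclideanSpace ℂ ((Fin n → Bool) × ZMod (m + 1)))
    (hU : ∀ (j : Fin m) (y : Fin n → Bool) (c : ZMod (m + 1)),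
      U j (EuclideanSpace.single (y, c) (1 : ℂ)) =
        EuclideanSpace.single (y, c + ((α j y : ℕ) : ZMod (m + 1))) (1 : ℂ))
    (hU' : ∀ (j : Fin m) (y : Fin n → Bool) (c : ZMod (m + 1)),
      U' j (EuclideanSpace.single (y, c) (1 : ℂ)) =
        EuclideanSpace.single (y, c - ((α j y : ℕ) : ZMod (m + 1))) (1 : ℂ))
    (hZ₀ : ∀ (y : Fin n → Bool) (c : ZMod (m + 1)),
      Z₀ (EuclideanSpace.single (y, c) (1 : ℂ)) =
        (if c = 0 then (-1 : ℂ) else 1) • EuclideanSpace.single (y, c) (1 : ℂ)) :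
    ∀ y : Fin n → Bool,
      (List.ofFn fun j : Fin m => U' j).reverse.foldl (fun v T => T v)
          (Z₀ ((List.ofFn fun j : Fin m => U j).foldl (fun v T => T v)
            (EuclideanSpace.single (y, (0 : ZMod (m + 1))) (1 : ℂ)))) =
        (if f y then (-1 : ℂ) else 1) •
          EuclideanSpace.single (y, (0 : ZMod (m + 1))) (1 : ℂ) := by
  intro y
  have h1 : ∀ (l : List (Fin m)) (c : ZMod (m + 1)),
      (l.map U).foldl (fun v T => T v) (EuclideanSpace.single (y, c) (1 : ℂ)) =
        EuclideanSpace.single (y, c + (((l.map fun j => α j y).sum : ℕ) : ZMod (m + 1)))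
          (1 : ℂ) := by
    intro l
    induction l with
    | nil => intro c; simp
    | cons a l ih =>
      intro c
      rw [List.map_cons, List.foldl_cons, hU, ih, List.map_cons, List.sum_cons, Nat.cast_add,
        add_assoc]
  have h2 : ∀ (l : List (Fin m)) (k : ℂ) (c : ZMod (m + 1)),
      (l.map U').reverse.foldl (fun v T => T v)
          (k • EuclideanSpace.single (y, c) (1 : ℂ)) =
        k • EuclideanSpace.single
          (y, c - (((l.map fun j => α j y).sum : ℕ) : ZMod (m + 1))) (1 : ℂ) := by
    intro l k c
    rw [List.foldl_reverse]
    induction l with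
    | nil => simp
    | cons a l ih =>
      rw [List.map_cons, List.foldr_cons, ih, map_smul, hU', List.map_cons, List.sum_cons,
        Nat.cast_add, sub_sub, add_comm (α a y : ZMod (m + 1))]
  have h3 : ((((List.finRange m).map fun j => α j y).sum : ℕ) : ZMod (m + 1)) = 0 ↔
      f y = true := by
    have hs : ((List.finRange m).map fun j => α j y).sum = ∑ j : Fin m, α j y := by
      rw [← List.ofFn_eq_map, List.sum_ofFn]
    have hle : ∑ j : Fin m, α j y ≤ m := by
      calc ∑ j : Fin m, α j y ≤ ∑ _j : Fin m, 1 := by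
            apply Finset.sum_le_sum
            intro j _
            rw [hα]
            split_ifs <;> simp
        _ = m := by simp
    rw [hs, ZMod.natCast_eq_zero_iff, hf]
    constructor
    · intro hd
      have h0 := Nat.eq_zero_of_dvd_of_lt hd (by omega)
      intro j
      have hj := (Finset.sum_eq_zero_iff.mp h0) j (Finset.mem_univ j)
      rw [hα] at hj
      by_contra hc
      simp [hc] at hj
    · intro h
      have h0 : ∑ j : Fin m, α j y = 0 := by
        apply Finset.sum_eq_zero
        intro j _
        rw [hα, h j]
        simp
      rw [h0]
      exact dvd_zero _
  rw [List.ofFn_eq_map, List.ofFn_eq_map, h1, hZ₀, h2]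
  simp only [zero_add, sub_self, h3]
end
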